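/- Let q ≥ 2. There exists a polynomial P ∈ R such that det(Ĵ) = Π^{q−1} · P, P is homogeneous of degree q² − q, and P is irreducible in R. (P is the homogeneous defining polynomial of the hypersurface J R_{q−1}, the image of the determinant hypersurface under Hadamard inversion.) -/

import Mathlib

open MvPolynomial

/-- The product `Π = ∏_{(a,b)} X_{a,b}` of all the variables. -/
noncomputable def PiProd (q : ℕ) : MvPolynomial (Fin q × Fin q) ℂ :=
  ∏ p : Fin q × Fin q, X p

/-- The homogeneous representation `Ĵ` of the Hadamard inverse:
`Ĵ_{i,j} = ∏_{(a,b) ≠ (i,j)} X_{a,b}`. -/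
noncomputable def Jhat (q : ℕ) : Matrix (Fin q) (Fin q) (MvPolynomial (Fin q × Fin q) ℂ) :=
  Matrix.of fun i j => ∏ p ∈ Finset.univ.erase (i, j), X p

/-!
In the fraction field, `det Ĵ = Π ^ q * det (1 / X)`, so `P = Π * det (1 / X)`: the monomial of `P`
indexed by a permutation is the product of all the variables off its permutation matrix. Hence `P`
has degree at most one in each variable, and the two factors of any factorization `P = A * B`
involve disjoint sets of variables. A permutation matrix has only one nonzero entry in each row and
column, so `P` lies in the prime ideal `(X u, X v)` whenever `u ≠ v` share a row or a column,
although no variable divides `P`; this forces `u` and `v` to occur in the same factor. Since any two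
cells are joined by moves along rows and columns, one of the factors is constant.
-/

section DisjointVariables

variable {σ R : Type*}

theorem X_dvd_of_mem_span_pair [CommSemiring R] {i j : σ} {A : MvPolynomial σ R}
    (hA : A ∈ Ideal.span {X i, X j}) (hj : j ∉ A.vars) : X i ∣ A := by
  rw [← Set.image_pair, mem_ideal_span_X_image] at hA
  rw [← Ideal.mem_span_singleton, ← Set.image_singleton, mem_ideal_span_X_image]
  intro m hm
  obtain ⟨k, rfl | rfl, hk⟩ := hA m hm
  · exact ⟨k, rfl, hk⟩
  · exact absurd ((mem_vars_iff_mem_support k).2 ⟨m, hm, Finsupp.mem_support_iff.2 hk⟩) hj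

theorem disjoint_vars_of_mul_mem_restrictDegree_one [CommSemiring R] [NoZeroDivisors R]
    {A B : MvPolynomial σ R} (hAB : A * B ≠ 0) (hdeg : A * B ∈ restrictDegree σ R 1) :
    Disjoint A.vars B.vars := by
  refine Finset.disjoint_left.2 fun i hiA hiB => ?_
  have hle : degreeOf i (A * B) ≤ 1 :=
    degreeOf_le_iff.2 fun m hm => (mem_restrictDegree _ _ _).1 hdeg m hm i
  rw [degreeOf_mul_eq (left_ne_zero_of_mul hAB) (right_ne_zero_of_mul hAB)] at hle
  have hposA := mem_vars_iff_degreeOf_ne_zero.1 hiA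
  have hposB := mem_vars_iff_degreeOf_ne_zero.1 hiB
  omega

variable [CommRing R] [IsDomain R]

theorem isPrime_span_X_image (s : Set σ) :
    (Ideal.span (X '' s : Set (MvPolynomial σ R))).IsPrime := by
  classical
  set I := Ideal.span (X '' s : Set (MvPolynomial σ R))
  let φ : MvPolynomial σ R →ₐ[R] MvPolynomial σ R := aeval fun i => if i ∈ s then 0 else X i
  have hφ : (Ideal.Quotient.mkₐ R I).comp φ = Ideal.Quotient.mkₐ R I := by
    ext i
    by_cases hi : i ∈ s
    · have hXi : X i ∈ I := Ideal.subset_span ⟨i, hi, rfl⟩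
      simp [φ, hi, Ideal.Quotient.eq_zero_iff_mem.2 hXi]
    · simp [φ, hi]
  have hker : I = RingHom.ker φ := by
    apply le_antisymm
    · rw [Ideal.span_le]
      rintro _ ⟨i, hi, rfl⟩
      simp [φ, hi]
    · intro p hp
      rw [← Ideal.Quotient.eq_zero_iff_mem, ← Ideal.Quotient.mkₐ_eq_mk R, ← hφ, AlgHom.comp_apply,
        (RingHom.mem_ker).1 hp, map_zero]
  rw [hker]
  exact RingHom.ker_isPrime _

theorem isPrime_span_X_pair (i j : σ) :
    (Ideal.span {X i, X j} : Ideal (MvPolynomial σ R)).IsPrime := by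
  rw [← Set.image_pair]
  exact isPrime_span_X_image {i, j}

theorem mem_vars_of_mul_mem_span_pair {i j : σ} {A B : MvPolynomial σ R}
    (hdisj : Disjoint A.vars B.vars) (hXi : ¬ X i ∣ A * B) (hXj : ¬ X j ∣ A * B)
    (hmem : A * B ∈ Ideal.span {X i, X j}) (hi : i ∈ A.vars) : j ∈ A.vars := by
  by_contra hj
  rcases (isPrime_span_X_pair i j).mem_or_mem hmem with hA | hB
  · exact hXi ((X_dvd_of_mem_span_pair hA hj).mul_right B)
  · rw [Set.pair_comm] at hB
    exact hXj ((X_dvd_of_mem_span_pair hB (Finset.disjoint_left.1 hdisj hi)).mul_left A)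

theorem irreducible_of_preconnected_of_mem_span_pair [Nontrivial σ] {P : MvPolynomial σ R}
    (hdeg : P ∈ restrictDegree σ R 1) (hC : ∀ r, C r ∣ P → IsUnit r) (hX : ∀ i, ¬ X i ∣ P)
    {G : SimpleGraph σ} (hG : G.Preconnected)
    (hadj : ∀ i j, G.Adj i j → P ∈ Ideal.span {X i, X j}) : Irreducible P := by
  have hconst : ∀ A, A ∣ P → A.vars = ∅ → IsUnit A := by
    intro A hA hvars
    rw [vars_eq_empty_iff_eq_C] at hvars
    rw [hvars] at hA ⊢
    exact (hC _ hA).map C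
  refine ⟨fun hunit => ?_, ?_⟩
  · obtain ⟨i⟩ : Nonempty σ := inferInstance
    obtain ⟨j, hij⟩ := hG.exists_adj_of_nontrivial i
    exact (isPrime_span_X_pair i j).ne_top (Ideal.eq_top_of_isUnit_mem _ (hadj i j hij) hunit)
  rintro A B rfl
  have hAB : A * B ≠ 0 := fun h => hX (Classical.arbitrary σ) (h ▸ dvd_zero _)
  have hdisj := disjoint_vars_of_mul_mem_restrictDegree_one hAB hdeg
  rcases A.vars.eq_empty_or_nonempty with hA | ⟨i, hi⟩
  · exact .inl (hconst A (dvd_mul_right A B) hA)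
  have hall : ∀ j, j ∈ A.vars := by
    intro j
    induction (SimpleGraph.reachable_iff_reflTransGen i j).1 (hG i j) with
    | refl => exact hi
    | tail _ hjk hj => exact mem_vars_of_mul_mem_span_pair hdisj (hX _) (hX _) (hadj _ _ hjk) hj
  refine .inr (hconst B (dvd_mul_left B A) (Finset.eq_empty_of_forall_notMem fun j => ?_))
  exact Finset.disjoint_left.1 hdisj (hall j)

end DisjointVariables

theorem prod_prod_univ_erase {ι M : Type*} [Fintype ι] [DecidableEq ι] [CommMonoid M]
    {s : Finset ι} (hs : s.Nonempty) (f : ι → M) :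
    ∏ a ∈ s, ∏ p ∈ Finset.univ.erase a, f p = (∏ p, f p) ^ (s.card - 1) * ∏ p ∈ sᶜ, f p := by
  induction hs using Finset.Nonempty.cons_induction with
  | singleton a => simp [Finset.compl_singleton]
  | cons a s ha hs ih =>
    have hcompl : ∏ p ∈ sᶜ, f p = f a * ∏ p ∈ (Finset.cons a s ha)ᶜ, f p := by
      rw [Finset.cons_eq_insert, Finset.compl_insert,
        Finset.mul_prod_erase _ _ (Finset.mem_compl.2 ha)]
    calc ∏ b ∈ Finset.cons a s ha, ∏ p ∈ Finset.univ.erase b, f p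
        = (f a * ∏ p ∈ Finset.univ.erase a, f p) *
            ((∏ p, f p) ^ (s.card - 1) * ∏ p ∈ (Finset.cons a s ha)ᶜ, f p) := by
          rw [Finset.prod_cons, ih, hcompl]
          ac_rfl
      _ = (∏ p, f p) ^ s.card * ∏ p ∈ (Finset.cons a s ha)ᶜ, f p := by
          rw [Finset.mul_prod_erase _ _ (Finset.mem_univ a), ← mul_assoc,
            mul_pow_sub_one hs.card_ne_zero]
      _ = (∏ p, f p) ^ ((Finset.cons a s ha).card - 1) * ∏ p ∈ (Finset.cons a s ha)ᶜ, f p := by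
          rw [Finset.card_cons, Nat.add_sub_cancel]

section PermGraph

variable {n : Type*} [Fintype n]

/-- The set of cells of the permutation matrix of `σ`, in the convention `(σ i, i)` of
`Matrix.det_apply`. -/
def permGraph (σ : Equiv.Perm n) : Finset (n × n) :=
  Finset.univ.map ⟨fun i => (σ i, i), Function.LeftInverse.injective (g := Prod.snd) fun _ => rfl⟩

theorem mem_permGraph {σ : Equiv.Perm n} {p : n × n} : p ∈ permGraph σ ↔ σ p.2 = p.1 := by
  simp [permGraph, Prod.ext_iff]

theorem card_permGraph (σ : Equiv.Perm n) : (permGraph σ).card = Fintype.card n := by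
  rw [permGraph, Finset.card_map, Finset.card_univ]

theorem prod_permGraph {M : Type*} [CommMonoid M] (σ : Equiv.Perm n) (f : n × n → M) :
    ∏ p ∈ permGraph σ, f p = ∏ i, f (σ i, i) := by
  rw [permGraph, Finset.prod_map, Function.Embedding.coeFn_mk]

theorem exists_mem_permGraph_notMem {σ τ : Equiv.Perm n} (h : σ ≠ τ) :
    ∃ p ∈ permGraph τ, p ∉ permGraph σ := by
  obtain ⟨i, hi⟩ := not_forall.1 (mt Equiv.ext h)
  exact ⟨(τ i, i), mem_permGraph.2 rfl, fun hmem => hi (mem_permGraph.1 hmem)⟩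

theorem notMem_permGraph_of_adj_boxProd_top (σ : Equiv.Perm n) {u v : n × n}
    (huv : ((⊤ : SimpleGraph n) □ ⊤).Adj u v) : u ∉ permGraph σ ∨ v ∉ permGraph σ := by
  by_contra! h
  obtain ⟨hu, hv⟩ := h
  rw [mem_permGraph] at hu hv
  rcases SimpleGraph.boxProd_adj.1 huv with ⟨hrow, hcol⟩ | ⟨hcol, hrow⟩
  · exact hrow (by rw [← hu, ← hv, hcol])
  · exact hcol (σ.injective (by rw [hu, hv, hrow]))

end PermGraph

section ReciprocalDet

variable {n A : Type*} [Fintype n] [DecidableEq n] [CommRing A]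

/-- The Hadamard inverse of the matrix with entries `x`, multiplied by the product of all the
entries so that it makes sense over any commutative ring. -/
def hadamardInverse (x : n × n → A) : Matrix n n A :=
  Matrix.of fun i j => ∏ p ∈ Finset.univ.erase (i, j), x p

/-- The determinant of the entrywise inverse of the matrix with entries `x`, multiplied by the
product of all the entries; at `x = X` it is the polynomial `P` of the theorem. -/
def reciprocalDet (x : n × n → A) : A :=
  ∑ σ : Equiv.Perm n, Equiv.Perm.sign σ • ∏ p ∈ (permGraph σ)ᶜ, x p

theorem det_hadamardInverse [Nonempty n] (x : n × n → A) :
    (hadamardInverse x).det = (∏ p, x p) ^ (Fintype.card n - 1) * reciprocalDet x := by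
  rw [Matrix.det_apply, reciprocalDet, Finset.mul_sum]
  refine Finset.sum_congr rfl fun σ _ => ?_
  have hne : (permGraph σ).Nonempty :=
    Finset.card_pos.1 ((card_permGraph σ).symm ▸ Fintype.card_pos)
  calc Equiv.Perm.sign σ • ∏ i, hadamardInverse x (σ i) i
      = Equiv.Perm.sign σ • ∏ a ∈ permGraph σ, ∏ p ∈ Finset.univ.erase a, x p := by
        rw [prod_permGraph]
        rfl
    _ = (∏ p, x p) ^ (Fintype.card n - 1) *
          Equiv.Perm.sign σ • ∏ p ∈ (permGraph σ)ᶜ, x p := by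
        rw [prod_prod_univ_erase hne, card_permGraph, mul_smul_comm]

theorem reciprocalDet_mem {S : Type*} [SetLike S A] [AddSubgroupClass S A] {s : S}
    {x : n × n → A} (h : ∀ σ : Equiv.Perm n, ∏ p ∈ (permGraph σ)ᶜ, x p ∈ s) :
    reciprocalDet x ∈ s :=
  sum_mem fun σ _ => zsmul_mem (h σ) (Equiv.Perm.sign σ : ℤ)

theorem map_reciprocalDet {B : Type*} [CommRing B] (f : A →+* B) (x : n × n → A) :
    f (reciprocalDet x) = reciprocalDet (f ∘ x) := by
  simp only [reciprocalDet, Units.smul_def, map_sum, map_zsmul, map_prod, Function.comp_apply]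

theorem reciprocalDet_one_sub_permMatrix (τ : Equiv.Perm n) :
    reciprocalDet (fun p => if p ∈ permGraph τ then (0 : A) else 1) =
      Equiv.Perm.sign τ • (1 : A) := by
  rw [reciprocalDet, Finset.sum_eq_single τ]
  · rw [Finset.prod_eq_one fun p hp => if_neg (Finset.mem_compl.1 hp)]
  · intro σ _ hσ
    obtain ⟨p, hpτ, hpσ⟩ := exists_mem_permGraph_notMem hσ
    rw [Finset.prod_eq_zero (i := p) (Finset.mem_compl.2 hpσ) (by rw [if_pos hpτ]), smul_zero]
  · exact fun h => absurd (Finset.mem_univ τ) h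

end ReciprocalDet

section GenericReciprocalDet

variable {n R : Type*} [Fintype n] [DecidableEq n] [CommRing R]

theorem isHomogeneous_reciprocalDet_X :
    (reciprocalDet (X : n × n → MvPolynomial (n × n) R)).IsHomogeneous
      (Fintype.card n ^ 2 - Fintype.card n) := by
  rw [← mem_homogeneousSubmodule]
  refine reciprocalDet_mem fun σ => ?_
  have hprod := IsHomogeneous.prod (permGraph σ)ᶜ (X (R := R)) _ fun p _ => isHomogeneous_X R p
  rwa [Finset.sum_const, smul_eq_mul, mul_one, Finset.card_compl, card_permGraph,
    Fintype.card_prod, ← sq] at hprod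

theorem reciprocalDet_X_mem_restrictDegree_one :
    reciprocalDet (X : n × n → MvPolynomial (n × n) R) ∈ restrictDegree (n × n) R 1 := by
  nontriviality R
  refine reciprocalDet_mem fun σ => ?_
  refine (mem_restrictDegree _ _ _).2 fun m hm p => degreeOf_le_iff.1 ?_ m hm
  refine (degreeOf_prod_le _ _ _).trans ?_
  simp only [degreeOf_X, Finset.sum_ite_eq]
  split_ifs <;> decide

theorem reciprocalDet_X_mem_span_pair {u v : n × n}
    (huv : ((⊤ : SimpleGraph n) □ ⊤).Adj u v) :
    reciprocalDet (X : n × n → MvPolynomial (n × n) R) ∈ Ideal.span {X u, X v} := by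
  refine reciprocalDet_mem fun σ => ?_
  rcases notMem_permGraph_of_adj_boxProd_top σ huv with hu | hv
  · exact Ideal.mem_of_dvd _ (Finset.dvd_prod_of_mem X (Finset.mem_compl.2 hu))
      (Ideal.subset_span (by simp))
  · exact Ideal.mem_of_dvd _ (Finset.dvd_prod_of_mem X (Finset.mem_compl.2 hv))
      (Ideal.subset_span (by simp))

theorem exists_isUnit_eval_reciprocalDet_X (u : n × n) :
    ∃ c : n × n → R, c u = 0 ∧ IsUnit (eval c (reciprocalDet X)) := by
  let τ := Equiv.swap u.1 u.2
  have hu : u ∈ permGraph τ := mem_permGraph.2 (Equiv.swap_apply_right _ _)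
  refine ⟨fun p => if p ∈ permGraph τ then 0 else 1, if_pos hu, ?_⟩
  have heval : ∀ c : n × n → R, eval c ∘ X = c := fun c => funext fun p => eval_X p
  rw [map_reciprocalDet, heval, reciprocalDet_one_sub_permMatrix]
  exact isUnit_one.smul _

theorem not_X_dvd_reciprocalDet_X [Nontrivial R] (u : n × n) :
    ¬ X u ∣ reciprocalDet (X : n × n → MvPolynomial (n × n) R) := by
  intro hdvd
  obtain ⟨c, hcu, hunit⟩ := exists_isUnit_eval_reciprocalDet_X (R := R) u
  have hzero := map_dvd (eval c) hdvd
  rw [eval_X, hcu] at hzero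
  exact not_isUnit_zero (isUnit_of_dvd_unit hzero hunit)

theorem isUnit_of_C_dvd_reciprocalDet_X [Nonempty n] {r : R}
    (hr : C r ∣ reciprocalDet (X : n × n → MvPolynomial (n × n) R)) : IsUnit r := by
  obtain ⟨c, -, hunit⟩ :=
    exists_isUnit_eval_reciprocalDet_X (R := R) (Classical.arbitrary (n × n))
  have hdvd := map_dvd (eval c) hr
  rw [eval_C] at hdvd
  exact isUnit_of_dvd_unit hdvd hunit

theorem irreducible_reciprocalDet_X [Nontrivial n] [IsDomain R] :
    Irreducible (reciprocalDet (X : n × n → MvPolynomial (n × n) R)) :=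
  irreducible_of_preconnected_of_mem_span_pair reciprocalDet_X_mem_restrictDegree_one
    (fun _ => isUnit_of_C_dvd_reciprocalDet_X) not_X_dvd_reciprocalDet_X
    (SimpleGraph.preconnected_top.boxProd SimpleGraph.preconnected_top)
    fun _ _ => reciprocalDet_X_mem_span_pair

end GenericReciprocalDet

theorem det_Jhat_eq_pow_mul_irreducible_general (n R : Type*) [Fintype n] [DecidableEq n]
    [Nontrivial n] [CommRing R] [IsDomain R] :
    ∃ P : MvPolynomial (n × n) R,
      (hadamardInverse X).det = (∏ p : n × n, X p) ^ (Fintype.card n - 1) * P ∧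
      P.IsHomogeneous (Fintype.card n ^ 2 - Fintype.card n) ∧
      Irreducible P :=
  ⟨reciprocalDet X, det_hadamardInverse X, isHomogeneous_reciprocalDet_X,
    irreducible_reciprocalDet_X⟩

/-- For `q ≥ 2` there is a polynomial `P` with `det Ĵ = Π^{q−1} · P`, where `P` is homogeneous
of degree `q² − q` and irreducible.  (`P` is the defining polynomial of `J R_{q−1}`.) -/
theorem det_Jhat_eq_pow_mul_irreducible (q : ℕ) (hq : 2 ≤ q) :
    ∃ P : MvPolynomial (Fin q × Fin q) ℂ,
      (Jhat q).det = PiProd q ^ (q - 1) * P ∧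
      P.IsHomogeneous (q ^ 2 - q) ∧
      Irreducible P := by
  have : Nontrivial (Fin q) := Fin.nontrivial_iff_two_le.2 hq
  have h := det_Jhat_eq_pow_mul_irreducible_general (Fin q) ℂ
  rwa [Fintype.card_fin] at h
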